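/- Let f: ℝ → [0,∞] be measurable and nowhere locally square-integrable, i.e. ∫_I f² = ∞ for every nonempty open interval I (for instance f(x) = Σ_{n=1}^∞ (1/n!)|x − r_n|^{−1/2} with (r_n) an enumeration of the rationals). If ψ: ℝ → ℂ is continuous and fψ ∈ L²(ℝ), then ψ = 0. Consequently, since H¹(ℝ) embeds into the continuous functions, the domain intersection D(p) ∩ D(M_f) = H¹(ℝ) ∩ {ψ ∈ L²(ℝ) : fψ ∈ L²(ℝ)} is the zero subspace. -/

import Mathlib

noncomputable section

open MeasureTheory Complex

/-- `L²(ℝ)`. -/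
abbrev L2R : Type := Lp ℂ 2 (volume : Measure ℝ)

/-- Graph characterization of the momentum operator `p = −i d/dx` with domain the first Sobolev
space `H¹(ℝ)`: `g = p f` iff `ig` is the weak derivative of `f`, i.e.
`∫ f φ' = −∫ (i g) φ` for every Schwartz function `φ`. -/
def IsMomentum (P : L2R →ₗ.[ℂ] L2R) : Prop :=
  ∀ f g : L2R, (f, g) ∈ P.graph ↔
    ∀ φ : SchwartzMap ℝ ℂ,
      ∫ x : ℝ, f x * deriv (⇑φ) x = -∫ x : ℝ, Complex.I * g x * φ x

/-!
Where a continuous function does not vanish it is bounded below in norm on some open set, and there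
a nowhere locally square-integrable multiplier already makes the integral infinite. For the operator
domain it remains to find continuous representatives of `H¹` functions. A weak derivative in `L²`
puts `u` in the Sobolev space of order `1`, which on the line exceeds half the dimension, so `𝓕 u`
is integrable by Cauchy–Schwarz and `u` agrees almost everywhere with the inverse Fourier integral
of `𝓕 u`, a continuous function.
-/

open Set FourierTransform TemperedDistribution
open scoped ENNReal Laplacian LineDeriv Real SchwartzMap

section NowhereLocallyIntegrable

variable {X : Type*} [TopologicalSpace X] [MeasurableSpace X] {μ : Measure X} {w Φ : X → ℝ≥0∞}

/-- A weight `w : X → [0,∞]` is nowhere locally integrable if its integral over every nonempty open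
set is infinite. A function `f` is nowhere locally square-integrable when `f ^ 2` has this
property. -/
def NowhereLocallyIntegrable (μ : Measure X) (w : X → ℝ≥0∞) : Prop :=
  ∀ U : Set X, IsOpen U → U.Nonempty → ∫⁻ x in U, w x ∂μ = ∞

theorem nowhereLocallyIntegrable_of_lintegral_Ioc [LinearOrder X] [OrderTopology X]
    [DenselyOrdered X] [Nontrivial X] (hw : ∀ a b, a < b → ∫⁻ x in Ioc a b, w x ∂μ = ∞) :
    NowhereLocallyIntegrable μ w := by
  intro U hU hUne
  obtain ⟨a, b, hab, habU⟩ := hU.exists_Ioo_subset hUne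
  obtain ⟨c, hac, hcb⟩ := exists_between hab
  refine eq_top_mono (lintegral_mono_set ?_) (hw a c hac)
  exact fun x hx ↦ habU ⟨hx.1, hx.2.trans_lt hcb⟩

theorem NowhereLocallyIntegrable.eq_zero_of_lintegral_mul_ne_top [OpensMeasurableSpace X]
    (hw : NowhereLocallyIntegrable μ w) (hΦ : LowerSemicontinuous Φ)
    (hwΦ : ∫⁻ x, w x * Φ x ∂μ ≠ ∞) : Φ = 0 := by
  by_contra hne
  obtain ⟨x₀, hx₀⟩ := Function.ne_iff.1 hne
  obtain ⟨c, hc, hcx₀⟩ := ENNReal.lt_iff_exists_nnreal_btwn.1 (pos_iff_ne_zero.2 hx₀)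
  have hU : IsOpen (Φ ⁻¹' Ioi (c : ℝ≥0∞)) := hΦ.isOpen_preimage c
  refine hwΦ (eq_top_mono ?_ (ENNReal.top_mul hc.ne'))
  calc ∞ * (c : ℝ≥0∞) = (∫⁻ x in Φ ⁻¹' Ioi (c : ℝ≥0∞), w x ∂μ) * c := by rw [hw _ hU ⟨x₀, hcx₀⟩]
    _ = ∫⁻ x in Φ ⁻¹' Ioi (c : ℝ≥0∞), w x * c ∂μ :=
        (lintegral_mul_const' _ _ ENNReal.coe_ne_top).symm
    _ ≤ ∫⁻ x in Φ ⁻¹' Ioi (c : ℝ≥0∞), w x * Φ x ∂μ :=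
        setLIntegral_mono' hU.measurableSet fun x hx ↦ mul_le_mul_right (le_of_lt hx) _
    _ ≤ ∫⁻ x, w x * Φ x ∂μ := setLIntegral_le_lintegral _ _

theorem eq_zero_of_continuous_of_lintegral_mul_enorm_pow_lt_top [OpensMeasurableSpace X]
    {E : Type*} [NormedAddCommGroup E] {f : X → ℝ≥0∞} {n : ℕ}
    (hf : NowhereLocallyIntegrable μ fun x ↦ f x ^ n) {ψ : X → E} (hψ : Continuous ψ)
    (hfψ : ∫⁻ x, (f x * ‖ψ x‖ₑ) ^ n ∂μ < ∞) : ψ = 0 := by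
  simp only [mul_pow] at hfψ
  have hΦ : Continuous fun x ↦ ‖ψ x‖ₑ ^ n := (ENNReal.continuous_pow n).comp hψ.enorm
  have hzero := hf.eq_zero_of_lintegral_mul_ne_top hΦ.lowerSemicontinuous hfψ.ne
  exact funext fun x ↦ enorm_eq_zero.1 (eq_zero_of_pow_eq_zero (congrFun hzero x))

end NowhereLocallyIntegrable

section Sobolev

variable {E F : Type*} [NormedAddCommGroup E] [InnerProductSpace ℝ E] [FiniteDimensional ℝ E]
  [MeasurableSpace E] [BorelSpace E] [NormedAddCommGroup F]

theorem integral_fourierInv_smul_eq [NormedSpace ℂ F] [CompleteSpace F] {φ : E → ℂ} {v : E → F}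
    (hφ : Integrable φ) (hv : Integrable v) : ∫ x, 𝓕⁻ φ x • v x = ∫ x, φ x • 𝓕⁻ v x := by
  have hflip : (-innerₗ E).flip = -innerₗ E := by ext; simp [real_inner_comm]
  simpa only [hflip] using! VectorFourier.integral_fourierIntegral_smul_eq_flip (L := -innerₗ E)
    Real.continuous_fourierChar continuous_inner.neg hφ hv

theorem continuous_fourierInv [NormedSpace ℂ F] {v : E → F} (hv : Integrable v) :
    Continuous (𝓕⁻ v) :=
  VectorFourier.fourierIntegral_continuous (L := -innerₗ E) Real.continuous_fourierChar
    continuous_inner.neg hv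

theorem ae_eq_fourierInv_of_fourier_eq [NormedSpace ℂ F] [CompleteSpace F] {p : ℝ≥0∞}
    [hp : Fact (1 ≤ p)] {u : Lp F p (volume : Measure E)} {v : Lp F 1 (volume : Measure E)}
    (huv : 𝓕 (u : 𝓢'(E, F)) = v) : u =ᵐ[volume] 𝓕⁻ (v : E → F) := by
  have hv : Integrable v := L1.integrable_coeFn v
  refine ae_eq_of_integral_contDiff_smul_eq ((Lp.memLp u).locallyIntegrable hp.out)
    (continuous_fourierInv hv).locallyIntegrable fun g hg hgc ↦ ?_
  have hgc' : HasCompactSupport (ofRealCLM ∘ g) := hgc.comp_left ofReal_zero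
  let φ : 𝓢(E, ℂ) := hgc'.toSchwartzMap (ofRealCLM.contDiff.comp hg)
  calc ∫ x, g x • u x = (u : 𝓢'(E, F)) φ := by simp [φ]
    _ = 𝓕⁻ (v : 𝓢'(E, F)) φ := by rw [← huv, fourierInv_fourier_eq]
    _ = ∫ x, 𝓕⁻ (φ : E → ℂ) x • v x := by
        rw [fourierInv_apply, Lp.toTemperedDistribution_apply, SchwartzMap.fourierInv_coe]
    _ = ∫ x, φ x • 𝓕⁻ (v : E → F) x := integral_fourierInv_smul_eq φ.integrable hv
    _ = ∫ x, g x • 𝓕⁻ (v : E → F) x := by simp [φ]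

theorem besselPotential_two_eq [NormedSpace ℂ F] (u : 𝓢'(E, F)) :
    besselPotential E F 2 u = u - ((2 * π) ^ 2)⁻¹ • Δ u := by
  have hsymbol : (fun x : E ↦ (((1 + ‖x‖ ^ 2) ^ (2 / 2 : ℝ) : ℝ) : ℂ)) =
      (fun _ ↦ 1) + fun x ↦ ((‖x‖ ^ 2 : ℝ) : ℂ) := by
    ext x
    simp
  have hsum : besselPotential E F 2 u =
      u + fourierMultiplierCLM F (fun x : E ↦ ((‖x‖ ^ 2 : ℝ) : ℂ)) u := by
    rw [besselPotential, hsymbol, fourierMultiplierCLM_apply,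
      smulLeftCLM_add (by fun_prop) (by fun_prop), add_apply, smulLeftCLM_const, one_smul,
      fourierInv_add, fourierInv_fourier_eq, ← fourierMultiplierCLM_apply]
  have hπ : (2 * π) ^ 2 ≠ 0 := by positivity
  rw [hsum, laplacian_eq_fourierMultiplierCLM, neg_smul, smul_neg, inv_smul_smul₀ hπ,
    sub_neg_eq_add]

-- `Δ u = ∑ᵢ ∂ᵢ (∂ᵢ u)` is only one order less regular than the first derivatives, so
-- `1 - (2π)⁻² Δ`, an isomorphism of order two, takes `u` into the Sobolev space of order `s - 1`.
theorem memSobolev_add_one_of_lineDerivOp [InnerProductSpace ℂ F] [CompleteSpace F]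
    {ι : Type*} [Fintype ι] (b : OrthonormalBasis ι ℝ E) {s : ℝ} {u : 𝓢'(E, F)}
    (hu : MemSobolev s 2 u) (hdu : ∀ i, MemSobolev s 2 (∂_{b i} u)) : MemSobolev (s + 1) 2 u := by
  have hΔ : MemSobolev (s - 1) 2 (Δ u) := by
    rw [laplacian_eq_sum b]
    exact Finset.sum_induction _ (MemSobolev (s - 1) 2) (fun _ _ ↦ MemSobolev.add)
      (memSobolev_fun_zero E F (s - 1) 2) fun i _ ↦ (hdu i).lineDerivOp
  have hbessel : MemSobolev (s - 1) 2 (besselPotential E F 2 u) := by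
    rw [besselPotential_two_eq, ← Complex.coe_smul]
    exact (hu.mono (sub_le_self s zero_le_one)).sub (hΔ.smul _)
  rwa [memSobolev_besselPotential_iff, show 2 + (s - 1) = s + 1 by ring] at hbessel

theorem exists_continuous_ae_eq_of_memSobolev [InnerProductSpace ℂ F] [CompleteSpace F]
    {p : ℝ≥0∞} [Fact (1 ≤ p)] {s : ℝ} (hs : Module.finrank ℝ E < 2 * s)
    {u : Lp F p (volume : Measure E)} (hu : MemSobolev s 2 (u : 𝓢'(E, F))) :
    ∃ v : E → F, Continuous v ∧ u =ᵐ[volume] v := by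
  obtain ⟨v, hv⟩ := hu.fourier_memL1 hs
  exact ⟨𝓕⁻ (v : E → F), continuous_fourierInv (L1.integrable_coeFn v),
    ae_eq_fourierInv_of_fourier_eq hv⟩

theorem nowhere_L2_multiplier_kills_momentum_domain_general
    [InnerProductSpace ℂ F] [CompleteSpace F] {f : E → ℝ≥0∞} {n : ℕ}
    (hf : NowhereLocallyIntegrable volume fun x ↦ f x ^ n) :
    (∀ ψ : E → F, Continuous ψ → ∫⁻ x, (f x * ‖ψ x‖ₑ) ^ n < ∞ → ψ = 0) ∧
    ∀ {p : ℝ≥0∞} [Fact (1 ≤ p)] {s : ℝ}, Module.finrank ℝ E < 2 * s →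
      ∀ u : Lp F p (volume : Measure E), MemSobolev s 2 (u : 𝓢'(E, F)) →
        ∫⁻ x, (f x * ‖u x‖ₑ) ^ n < ∞ → u = 0 := by
  refine ⟨fun ψ ↦ eq_zero_of_continuous_of_lintegral_mul_enorm_pow_lt_top hf,
    fun hs u hu hfu ↦ ?_⟩
  obtain ⟨v, hv, huv⟩ := exists_continuous_ae_eq_of_memSobolev hs hu
  have hfv : ∫⁻ x, (f x * ‖v x‖ₑ) ^ n < ∞ :=
    (lintegral_congr_ae (huv.mono fun x hx ↦ by rw [hx])).trans_lt hfu
  have hv0 : v = 0 := eq_zero_of_continuous_of_lintegral_mul_enorm_pow_lt_top hf hv hfv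
  exact Lp.eq_zero_iff_ae_eq_zero.2 (hv0 ▸ huv)

end Sobolev

theorem IsMomentum.lineDerivOp_eq {P : L2R →ₗ.[ℂ] L2R} (hP : IsMomentum P) {u v : L2R}
    (huv : (u, v) ∈ P.graph) :
    ∂_{(1 : ℝ)} (u : 𝓢'(ℝ, ℂ)) = ((I • v : L2R) : 𝓢'(ℝ, ℂ)) := by
  ext φ
  calc ∂_{(1 : ℝ)} (u : 𝓢'(ℝ, ℂ)) φ = -∫ x, u x * deriv φ x := by
        rw [lineDerivOp_apply_apply, Lp.toTemperedDistribution_apply, ← integral_neg]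
        congr 1 with x
        rw [neg_apply, SchwartzMap.lineDerivOp_apply_eq_fderiv,
          fderiv_apply_one_eq_deriv, smul_eq_mul, neg_mul, mul_comm]
    _ = ∫ x, I * v x * φ x := by rw [(hP u v).1 huv φ, neg_neg]
    _ = ((I • v : L2R) : 𝓢'(ℝ, ℂ)) φ := by
        rw [Lp.toTemperedDistribution_apply]
        refine integral_congr_ae ((Lp.coeFn_smul I v).mono fun x hx ↦ ?_)
        simp only [hx, Pi.smul_apply, smul_eq_mul]
        ring

theorem IsMomentum.memSobolev_one {P : L2R →ₗ.[ℂ] L2R} (hP : IsMomentum P) {u : L2R}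
    (hu : u ∈ P.domain) : MemSobolev 1 2 (u : 𝓢'(ℝ, ℂ)) := by
  obtain ⟨v, huv⟩ := LinearPMap.mem_domain_iff.1 hu
  rw [← zero_add (1 : ℝ)]
  refine memSobolev_add_one_of_lineDerivOp (OrthonormalBasis.singleton Unit ℝ)
    (memSobolev_zero_iff.2 ⟨u, rfl⟩) fun _ ↦ memSobolev_zero_iff.2 ⟨I • v, ?_⟩
  rw [OrthonormalBasis.singleton_apply, hP.lineDerivOp_eq huv]

/-- If `f : ℝ → [0,∞]` is measurable and nowhere locally square-integrable,
then any continuous `ψ` with `fψ ∈ L²` vanishes; consequently the domain intersection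
`D(p) ∩ D(M_f) = H¹(ℝ) ∩ {ψ : fψ ∈ L²}` is the zero subspace. -/
theorem nowhere_L2_multiplier_kills_momentum_domain
    (f : ℝ → ENNReal) (hf : Measurable f)
    (hf2 : ∀ a b : ℝ, a < b → ∫⁻ x in Set.Ioc a b, (f x) ^ 2 ∂volume = ⊤) :
    (∀ ψ : ℝ → ℂ, Continuous ψ →
      (∫⁻ x : ℝ, (f x * (‖ψ x‖₊ : ENNReal)) ^ 2 ∂volume) < ⊤ → ψ = 0) ∧
    ∀ (P : L2R →ₗ.[ℂ] L2R), IsMomentum P →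
      ∀ g : L2R, g ∈ P.domain →
        (∫⁻ x : ℝ, (f x * (‖g x‖₊ : ENNReal)) ^ 2 ∂volume) < ⊤ → g = 0 := by
  obtain ⟨hcont, hsob⟩ := nowhere_L2_multiplier_kills_momentum_domain_general (F := ℂ)
    (nowhereLocallyIntegrable_of_lintegral_Ioc hf2)
  exact ⟨hcont, fun P hP g hg ↦ hsob (s := 1) (by norm_num) g (hP.memSobolev_one hg)⟩
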